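/- Let (B, A) be a 3-colored digraph where B is a connected bicyclic graph of θ-type on n vertices having a perfect matching, such that all three cycles of B are independent, exactly one cycle Γ₁ has weight in {1, −1}, and the other two cycles have weight in {i, −i}. Then det A = (−1)^{n/2}·(3 − 2·w(Γ₁)·(−1)^{|Γ₁|/2}); in particular, det A ≠ 0. -/

import Mathlib

/-!
Sets of edges are encoded as vectors `Sym2 V → ZMod 2`, so that symmetric difference is addition.
The even sets of a bicyclic graph form an `𝔽₂`-space of dimension at most two
(`finrank_ker_incidence`), so two distinct cycles `c`, `d` generate it (`IsEvenSet.cases`), and two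
perfect matchings always differ by an even set.

An independent cycle has even length and is the difference of two perfect matchings
(`IsIndep.even_length`, `IsIndep.exists_pm`). In the θ-type case two cycles `c`, `d` share an edge,
and it follows that there are exactly three perfect matchings, `x`, `x + c` and `x + d`
(`exists_three_pms`); they differ pairwise by the three cycles. All closed walks have even length,
so the graph is bipartite (`two_colorable`), and `det A = (-1)^(n/2) |det N|²` for the block `N` of
`A` between the two sides (`det_eq_normSq`).

The Leibniz expansion of `det N` has three nonzero terms `z₁`, `z₂`, `z₃`, one for each perfect
matching, all of modulus one. If two matchings differ by the cycle `Γ`, the corresponding product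
`zᵢ z̄ⱼ` has real part `-(-1)^(|Γ|/2) Re w(Γ)`, because the two permutations differ by a cyclic
permutation of length `|Γ|/2` (`re_permTerm_mul_star`). In `|z₁ + z₂ + z₃|²`, which is 3 plus twice
the sum of these real parts, only `Γ₁` contributes, since the weights of the other two cycles are
purely imaginary (`sum_three_mul_star`).
-/

open SimpleGraph

/-- A perfect matching of a simple graph, given as a finite set of edges in which
every vertex lies in exactly one edge. -/
def IsPM {V : Type*} [DecidableEq V] (G : SimpleGraph V) (M : Finset (Sym2 V)) : Prop :=
  (∀ e ∈ M, e ∈ G.edgeSet) ∧ ∀ v : V, (M.filter (fun e => v ∈ e)).card = 1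

/-- `G` has a perfect matching. -/
def HasPM {V : Type*} [DecidableEq V] (G : SimpleGraph V) : Prop :=
  ∃ M, IsPM G M

/-- `(G, A)` is a 3-colored digraph: `A` is Hermitian with zero diagonal, entries in
`{1, -1, i, -i}` on edges of `G`, and `0` on non-edges. -/
def ThreeColored {V : Type*} (G : SimpleGraph V) (A : Matrix V V ℂ) : Prop :=
  A.IsHermitian ∧ (∀ v, A v v = 0) ∧
    (∀ u v, G.Adj u v → A u v ∈ ({1, -1, Complex.I, -Complex.I} : Set ℂ)) ∧
    (∀ u v, u ≠ v → ¬ G.Adj u v → A u v = 0)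

/-- The weight of a walk: the product of the entries of `A` along its darts. -/
def walkWeight {V : Type*} {G : SimpleGraph V} (A : Matrix V V ℂ) {u v : V}
    (p : G.Walk u v) : ℂ :=
  (p.darts.map (fun d => A d.toProd.1 d.toProd.2)).prod

/-- A closed walk (e.g. a cycle) `c` is independent in `G` if `G - V(c)` has a
perfect matching. -/
def IsIndep {V : Type*} [DecidableEq V] (G : SimpleGraph V) {u : V} (c : G.Walk u u) : Prop :=
  HasPM (G.induce {x : V | x ∉ c.support})

/-- The number of perfect matchings of `G`. -/
noncomputable def numPM (V : Type*) [DecidableEq V] (G : SimpleGraph V) : ℕ :=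
  {M : Finset (Sym2 V) | IsPM G M}.ncard

/-- A connected graph on `n` vertices is unicyclic if it has exactly `n` edges. -/
def Unicyclic (V : Type*) [Fintype V] (G : SimpleGraph V) : Prop :=
  G.Connected ∧ G.edgeSet.ncard = Fintype.card V

/-- A connected graph on `n` vertices is bicyclic if it has exactly `n + 1` edges. -/
def Bicyclic (V : Type*) [Fintype V] (G : SimpleGraph V) : Prop :=
  G.Connected ∧ G.edgeSet.ncard = Fintype.card V + 1

/-- Two cycles are regarded as the same cycle when they have the same edge set. -/
def SameCycle {V : Type*} [DecidableEq V] {G : SimpleGraph V} {u v : V}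
    (c : G.Walk u u) (d : G.Walk v v) : Prop :=
  c.edges.toFinset = d.edges.toFinset

/-- A bicyclic graph is of ∞-type if its cycles are pairwise edge-disjoint. -/
def InfinityType {V : Type*} [DecidableEq V] (G : SimpleGraph V) : Prop :=
  ∀ (u v : V) (c : G.Walk u u) (d : G.Walk v v), c.IsCycle → d.IsCycle →
    ¬ SameCycle c d → ∀ e ∈ c.edges, e ∉ d.edges

/-- A bicyclic graph is of θ-type if it is not of ∞-type. -/
def ThetaType {V : Type*} [DecidableEq V] (G : SimpleGraph V) : Prop :=
  ¬ InfinityType G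

/-- `e` is a peg on the cycle `c`: either a chord of `c`, or an edge joining a vertex
of `c` to a vertex outside `c`. -/
def IsPeg {V : Type*} {G : SimpleGraph V} {u : V} (c : G.Walk u u) (e : Sym2 V) : Prop :=
  ∃ x y, e = s(x, y) ∧
    ((x ∈ c.support ∧ y ∈ c.support ∧ e ∉ c.edges) ∨ (x ∈ c.support ∧ y ∉ c.support))

/-- The number of pegs on the cycle `c` relative to the perfect matching `M`. -/
noncomputable def pegCount {V : Type*} {G : SimpleGraph V} {u : V} (c : G.Walk u u)
    (M : Finset (Sym2 V)) : ℕ :=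
  {e : Sym2 V | e ∈ M ∧ IsPeg c e}.ncard

/-- A path is mm-alternating relative to `M` if its edges alternately belong to `M`,
beginning and ending with edges of `M`. -/
def MMAlt {V : Type*} {G : SimpleGraph V} (M : Finset (Sym2 V)) {a b : V}
    (p : G.Walk a b) : Prop :=
  p.IsPath ∧ Odd p.length ∧
    ∀ (k : ℕ) (h : k < p.edges.length), (p.edges.get ⟨k, h⟩ ∈ M ↔ Even k)

/-! ### Even edge sets and the cycle space -/

theorem vec_add_self {V : Type*} (f : Sym2 V → ZMod 2) : f + f = 0 :=
  funext fun _ => CharTwo.add_self_eq_zero _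

/-- `f` is the mod 2 indicator vector of a set of edges of `G` in which every vertex has even degree,
that is, an element of the cycle space of `G`. -/
def IsEvenSet {V : Type*} [Fintype V] (G : SimpleGraph V) (f : Sym2 V → ZMod 2) : Prop :=
  (∀ e, f e ≠ 0 → e ∈ G.edgeSet) ∧ ∀ v, ∑ w, f s(v, w) = 0

theorem IsEvenSet.add {V : Type*} [Fintype V] {G : SimpleGraph V} {f g : Sym2 V → ZMod 2}
    (hf : IsEvenSet G f) (hg : IsEvenSet G g) : IsEvenSet G (f + g) := by
  refine ⟨fun e he => ?_, fun v => ?_⟩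
  · by_contra h
    have h1 : f e = 0 := by by_contra h'; exact h (hf.1 e h')
    have h2 : g e = 0 := by by_contra h'; exact h (hg.1 e h')
    simp [h1, h2] at he
  · simp [Finset.sum_add_distrib, hf.2 v, hg.2 v]

/-- Multiplying `f` by the incidence matrix amounts to summing over the edges at `v`. -/
theorem sum_incident {V : Type*} [Fintype V] [DecidableEq V] (G : SimpleGraph V)
    [Fintype G.edgeSet] (f : Sym2 V → ZMod 2) (hf : ∀ e, f e ≠ 0 → e ∈ G.edgeSet) (v : V) :
    ∑ e : G.edgeSet, (if v ∈ e.1 then 1 else 0) * f e.1 = ∑ w, f s(v, w) := by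
  classical
  rw [← Finset.sum_filter_ne_zero (s := (Finset.univ : Finset V)),
    ← Finset.sum_filter_ne_zero (s := (Finset.univ : Finset G.edgeSet))]
  symm
  refine Finset.sum_bij (fun w hw => ⟨s(v, w), hf _ (Finset.mem_filter.1 hw).2⟩) ?_ ?_ ?_ ?_
  · intro w hw
    simpa using hw
  · intro w _ w' _ h
    have := congrArg Subtype.val h
    exact Sym2.congr_right.1 this
  · rintro ⟨e, he⟩ h
    have h' : v ∈ e ∧ f e ≠ 0 := by simpa using h
    obtain ⟨w, rfl⟩ := Sym2.mem_iff_exists.1 h'.1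
    exact ⟨w, by simpa using h'.2, rfl⟩
  · intro w _
    simp

/-- The cycle space over `𝔽₂` of a bicyclic graph has dimension at most 2. In a connected graph the
kernel of the transposed incidence matrix consists of constant functions, so the incidence matrix
has rank at least `n - 1`; there are `n + 1` edges, and rank–nullity applies. -/
theorem finrank_ker_incidence {V : Type*} [Fintype V] [DecidableEq V] (G : SimpleGraph V)
    [Fintype G.edgeSet] (hG : Bicyclic V G) :
    Module.finrank (ZMod 2) (LinearMap.ker (Matrix.mulVecLin
      (Matrix.of fun (v : V) (e : G.edgeSet) => if v ∈ e.1 then (1 : ZMod 2) else 0))) ≤ 2 := by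
  classical
  set D : Matrix V G.edgeSet (ZMod 2) :=
    Matrix.of fun (v : V) (e : G.edgeSet) => if v ∈ e.1 then (1 : ZMod 2) else 0 with hD
  have h1 := LinearMap.finrank_range_add_finrank_ker D.mulVecLin
  have h2 := LinearMap.finrank_range_add_finrank_ker D.transpose.mulVecLin
  have h3 : D.transpose.rank = D.rank := Matrix.rank_transpose D
  unfold Matrix.rank at h3
  have hcard : Fintype.card G.edgeSet = Fintype.card V + 1 := by
    rw [← hG.2, ← Nat.card_coe_set_eq, Nat.card_eq_fintype_card]
  rw [Module.finrank_fintype_fun_eq_card] at h1 h2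
  have h4 : Module.finrank (ZMod 2) (LinearMap.ker D.transpose.mulVecLin) ≤ 1 := by
    have hle : LinearMap.ker D.transpose.mulVecLin ≤ Submodule.span (ZMod 2) {fun _ : V => 1} := by
      intro g hg
      rw [LinearMap.mem_ker] at hg
      have hadj : ∀ u v, G.Adj u v → g u = g v := by
        intro u v huv
        have := congrFun hg ⟨s(u, v), huv⟩
        simp only [Matrix.mulVecLin_apply, Matrix.mulVec, dotProduct, Matrix.transpose_apply, hD,
          Matrix.of_apply, Sym2.mem_iff, Pi.zero_apply, ite_mul, one_mul, zero_mul] at this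
        rw [← Finset.sum_filter, Finset.sum_subset (s₁ := Finset.filter _ _) (s₂ := {u, v})] at this
        · rw [Finset.sum_pair huv.ne] at this
          exact CharTwo.add_eq_zero.1 this
        · intro x; simp
        · intro x; simp; tauto
      have hwalk : ∀ u v, G.Walk u v → g u = g v := by
        intro u v w
        induction w with
        | nil => rfl
        | cons h _ ih => exact (hadj _ _ h).trans ih
      obtain ⟨x⟩ := hG.1.nonempty
      rw [Submodule.mem_span_singleton]
      refine ⟨g x, ?_⟩
      funext v
      simpa using hwalk x v (hG.1.preconnected x v).some
    exact (Submodule.finrank_mono hle).trans ((finrank_span_le_card _).trans (by simp))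
  omega

/-- The cycle space of a bicyclic graph has at most four elements. -/
theorem IsEvenSet.cases {V : Type*} [Fintype V] [DecidableEq V] {G : SimpleGraph V}
    (hG : Bicyclic V G) {f κ δ : Sym2 V → ZMod 2} (hf : IsEvenSet G f) (hκ : IsEvenSet G κ)
    (hδ : IsEvenSet G δ) (hκ0 : κ ≠ 0) (hδ0 : δ ≠ 0) (hκδ : κ ≠ δ) :
    f = 0 ∨ f = κ ∨ f = δ ∨ f = κ + δ := by
  classical
  have hfin := finrank_ker_incidence G hG
  set K := LinearMap.ker (Matrix.mulVecLin
      (Matrix.of fun (v : V) (e : G.edgeSet) => if v ∈ e.1 then (1 : ZMod 2) else 0)) with hK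
  have hcard : Fintype.card K ≤ 4 := by
    rw [Module.card_eq_pow_finrank (K := ZMod 2), ZMod.card]
    exact (Nat.pow_le_pow_right (by norm_num) hfin).trans (by norm_num)
  have hmem : ∀ g, IsEvenSet G g → (fun e : G.edgeSet => g e.1) ∈ K := by
    intro g hg
    rw [hK, LinearMap.mem_ker]
    funext v
    simpa [Matrix.mulVec, dotProduct] using (sum_incident G g hg.1 v).trans (hg.2 v)
  have hinj : ∀ g g', IsEvenSet G g → IsEvenSet G g' →
      (fun e : G.edgeSet => g e.1) = (fun e : G.edgeSet => g' e.1) → g = g' := by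
    intro g g' hg hg' h
    funext e
    by_cases he : e ∈ G.edgeSet
    · exact congrFun h ⟨e, he⟩
    · rw [show g e = 0 by by_contra h'; exact he (hg.1 e h'),
        show g' e = 0 by by_contra h'; exact he (hg'.1 e h')]
  have h0 : IsEvenSet G (0 : Sym2 V → ZMod 2) := ⟨by simp, by simp⟩
  have hs := hκ.add hδ
  by_contra! hne
  let F : Fin 5 → {g // IsEvenSet G g} := ![⟨f, hf⟩, ⟨0, h0⟩, ⟨κ, hκ⟩, ⟨δ, hδ⟩, ⟨κ + δ, hs⟩]
  let F' : Fin 5 → K := fun i => ⟨fun e => (F i).1 e.1, hmem _ (F i).2⟩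
  have hFF' : ∀ i j, F' i = F' j → (F i).1 = (F j).1 := fun i j h =>
    hinj _ _ (F i).2 (F j).2 (congrArg Subtype.val h)
  have e1 : κ + δ ≠ 0 := fun h => hκδ (by
    funext e; exact CharTwo.add_eq_zero.1 (congrFun h e))
  have e2 : κ + δ ≠ κ := by simpa using hδ0
  have e3 : κ + δ ≠ δ := by simpa using hκ0
  have hF' : Function.Injective F' := by
    intro i j h
    have := hFF' i j h
    fin_cases i <;> fin_cases j <;> simp [F] at this ⊢ <;>
      first
      | exact hne.1 this | exact hne.2.1 this | exact hne.2.2.1 this | exact hne.2.2.2 this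
      | exact hne.1 this.symm | exact hne.2.1 this.symm | exact hne.2.2.1 this.symm
      | exact hne.2.2.2 this.symm
      | exact hκ0 this | exact hδ0 this | exact hκδ this | exact e1 this
      | exact hκ0 this.symm | exact hδ0 this.symm | exact hκδ this.symm | exact e1 this.symm
  have := Fintype.card_le_of_injective F' hF'
  simp at this
  omega

/-! ### Walks as vectors and cyclic vertex sequences -/

/-- The mod 2 edge vector of a walk: each edge is sent to the parity of the number of times it is
traversed. For a cycle this is the indicator function of its edge set. -/
def walkVec {V : Type*} [DecidableEq V] {G : SimpleGraph V} {u v : V} (p : G.Walk u v) :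
    Sym2 V → ZMod 2 :=
  fun e => (p.edges.count e : ZMod 2)

/-- A walk meets each vertex an even number of times, apart from the contributions of its ends. -/
theorem walkVec_row {V : Type*} [Fintype V] [DecidableEq V] {G : SimpleGraph V} {u v : V}
    (p : G.Walk u v) (x : V) :
    ∑ w, walkVec p s(x, w) = (if x = u then 1 else 0) + (if x = v then 1 else 0) := by
  induction p with
  | nil => simp [walkVec, CharTwo.add_self_eq_zero]
  | @cons a b c h p ih =>
    have hab : ∑ w, (if s(a, b) = s(x, w) then (1 : ZMod 2) else 0)
        = (if x = a then 1 else 0) + (if x = b then 1 else 0) := by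
      by_cases hxa : x = a
      · subst hxa
        simp only [Sym2.congr_right]
        simp [h.ne]
      · by_cases hxb : x = b
        · subst hxb
          simp only [Sym2.eq_swap (a := a) (b := x), Sym2.congr_right]
          simp [hxa]
        · simp [hxa, hxb, Ne.symm hxa, Ne.symm hxb]
    simp only [walkVec, Walk.edges_cons, List.count_cons, Nat.cast_add, Finset.sum_add_distrib]
      at ih ⊢
    rw [ih]
    simp only [beq_iff_eq, Nat.cast_ite, Nat.cast_one, Nat.cast_zero]
    rw [hab]
    have := CharTwo.add_self_eq_zero (if x = b then (1 : ZMod 2) else 0)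
    linear_combination this

theorem walkVec_isEvenSet {V : Type*} [Fintype V] [DecidableEq V] {G : SimpleGraph V} {u : V}
    (p : G.Walk u u) : IsEvenSet G (walkVec p) := by
  refine ⟨fun e he => ?_, fun v => ?_⟩
  · apply p.edges_subset_edgeSet
    by_contra h
    simp [walkVec, List.count_eq_zero_of_not_mem h] at he
  · rw [walkVec_row, CharTwo.add_self_eq_zero]

theorem walkVec_sum {V : Type*} [Fintype V] [DecidableEq V] {G : SimpleGraph V} {u v : V}
    (p : G.Walk u v) : ∑ e, walkVec p e = p.length := by
  simp only [walkVec]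
  rw [← Walk.length_edges]
  induction p.edges with
  | nil => simp
  | cons e l ih => simp [List.count_cons, Finset.sum_add_distrib, ih]

theorem walkVec_of_isCycle {V : Type*} [DecidableEq V] {G : SimpleGraph V} {u : V}
    {p : G.Walk u u} (hp : p.IsCycle) (e : Sym2 V) :
    walkVec p e = if e ∈ p.edges then 1 else 0 := by
  split_ifs with h
  · simp [walkVec, List.count_eq_one_of_mem hp.edges_nodup h]
  · simp [walkVec, List.count_eq_zero_of_not_mem h]

/-- `g` enumerates the vertices of a cycle of length `L` in `G` cyclically: it is an `L`-periodic
sequence with consecutive terms adjacent, injective on residues modulo `L`. -/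
structure CycSeq {V : Type*} (G : SimpleGraph V) (L : ℕ) (g : ℕ → V) : Prop where
  three_le : 3 ≤ L
  adj : ∀ i, G.Adj (g i) (g (i + 1))
  eq_iff : ∀ i j, g i = g j ↔ i ≡ j [MOD L]

theorem walkWeight_eq_prod {V : Type*} {G : SimpleGraph V} (A : Matrix V V ℂ) {u v : V}
    (p : G.Walk u v) :
    walkWeight A p = ∏ i ∈ Finset.range p.length, A (p.getVert i) (p.getVert (i + 1)) := by
  induction p with
  | nil => simp [walkWeight]
  | cons h p ih =>
    rw [Walk.length_cons, Finset.prod_range_succ']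
    simp only [walkWeight, Walk.darts_cons, List.map_cons, List.prod_cons,
      Walk.getVert_cons_succ, Walk.getVert_zero] at ih ⊢
    rw [ih, mul_comm]

theorem mem_edges_iff_getVert {V : Type*} {G : SimpleGraph V} {u v : V}
    (p : G.Walk u v) (e : Sym2 V) :
    e ∈ p.edges ↔ ∃ i < p.length, e = s(p.getVert i, p.getVert (i + 1)) := by
  induction p with
  | nil => simp
  | cons h p ih =>
    rw [Walk.edges_cons, List.mem_cons, ih, Walk.length_cons]
    constructor
    · rintro (rfl | ⟨i, hi, rfl⟩)
      · exact ⟨0, by omega, by simp⟩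
      · exact ⟨i + 1, by omega, by simp⟩
    · rintro ⟨i, hi, rfl⟩
      cases i with
      | zero => left; simp
      | succ i => right; exact ⟨i, by omega, by simp⟩

/-- Every cycle has a periodic enumeration of its vertices, through which its edges, its vertices and
its weight can be read off. -/
theorem exists_cycSeq {V : Type*} {G : SimpleGraph V} {u : V} {c : G.Walk u u}
    (hc : c.IsCycle) : ∃ g, CycSeq G c.length g ∧ (∀ e, e ∈ c.edges ↔ ∃ i, e = s(g i, g (i + 1))) ∧
      (∀ v, v ∈ c.support ↔ ∃ i, v = g i) ∧ ∀ A : Matrix V V ℂ,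
        walkWeight A c = ∏ i ∈ Finset.range c.length, A (g i) (g (i + 1)) := by
  have hL := hc.three_le_length
  set L := c.length with hLdef
  have hsucc : ∀ i, c.getVert ((i + 1) % L) = c.getVert (i % L + 1) := by
    intro i
    have h1 : i % L < L := Nat.mod_lt _ (by omega)
    rw [Nat.add_mod, Nat.mod_eq_of_lt (show 1 < L by omega)]
    rcases Nat.lt_or_ge (i % L + 1) L with h | h
    · rw [Nat.mod_eq_of_lt h]
    · have : i % L + 1 = L := by omega
      rw [this, Nat.mod_self, Walk.getVert_zero, hLdef, Walk.getVert_length]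
  refine ⟨fun i => c.getVert (i % L), ⟨hL, fun i => ?_, fun i j => ?_⟩, fun e => ?_, fun v => ?_,
    fun A => ?_⟩
  · rw [hsucc]
    exact c.adj_getVert_succ (Nat.mod_lt _ (by omega))
  · have h1 : i % L < L := Nat.mod_lt _ (by omega)
    have h2 : j % L < L := Nat.mod_lt _ (by omega)
    refine ⟨fun h => ?_, fun h => by simp only [Nat.ModEq] at h; simp [h]⟩
    exact hc.getVert_injOn' (by simp; omega) (by simp; omega) h
  · rw [mem_edges_iff_getVert]
    constructor
    · rintro ⟨i, hi, rfl⟩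
      refine ⟨i, ?_⟩
      simp only [hsucc]
      rw [Nat.mod_eq_of_lt hi]
    · rintro ⟨i, rfl⟩
      refine ⟨i % L, Nat.mod_lt _ (by omega), ?_⟩
      simp only [hsucc]
  · rw [Walk.mem_support_iff_exists_getVert]
    constructor
    · rintro ⟨i, rfl, hi⟩
      rcases Nat.lt_or_ge i L with h | h
      · exact ⟨i, by simp [Nat.mod_eq_of_lt h]⟩
      · refine ⟨0, ?_⟩
        rw [show i = c.length by omega]
        simp
    · rintro ⟨i, rfl⟩
      exact ⟨i % L, rfl, (Nat.mod_lt _ (by omega)).le⟩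
  · rw [walkWeight_eq_prod]
    refine Finset.prod_congr rfl fun i hi => ?_
    simp only [hsucc]
    rw [Nat.mod_eq_of_lt (Finset.mem_range.1 hi)]

/-! ### Perfect matchings as vectors and independent cycles -/

theorem CycSeq.shift {V : Type*} {G : SimpleGraph V} {L : ℕ} {g : ℕ → V} (hg : CycSeq G L g) :
    CycSeq G L (fun i => g (i + 1)) :=
  ⟨hg.three_le, fun i => hg.adj (i + 1), fun i j => by
    rw [hg.eq_iff]; exact ⟨fun h => Nat.ModEq.add_right_cancel' 1 h, fun h => h.add_right 1⟩⟩

theorem CycSeq.parity {V : Type*} {G : SimpleGraph V} {k : ℕ} {g : ℕ → V}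
    (hg : CycSeq G (2 * k) g) {i j : ℕ} (h : g i = g j) : i % 2 = j % 2 :=
  Nat.ModEq.of_dvd (Dvd.intro _ rfl) ((hg.eq_iff i j).1 h)

theorem CycSeq.succ_eq {V : Type*} {G : SimpleGraph V} {L : ℕ} {g : ℕ → V}
    (hg : CycSeq G L g) {i j : ℕ} : g (i + 1) = g (j + 1) ↔ g i = g j := by
  rw [hg.eq_iff, hg.eq_iff]
  exact ⟨fun h => Nat.ModEq.add_right_cancel' 1 h, fun h => h.add_right 1⟩

theorem CycSeq.ne_add_two {V : Type*} {G : SimpleGraph V} {L : ℕ} {g : ℕ → V}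
    (hg : CycSeq G L g) (i : ℕ) : g i ≠ g (i + 2) := by
  intro h
  have h1 := (Nat.modEq_iff_dvd' (by omega)).1 ((hg.eq_iff i (i + 2)).1 h)
  have := Nat.le_of_dvd (by omega) h1
  have := hg.three_le
  omega

/-- Every vertex of the cyclic sequence is preceded by another one. -/
theorem CycSeq.exists_succ {V : Type*} {G : SimpleGraph V} {L : ℕ} {g : ℕ → V}
    (hg : CycSeq G L g) (j : ℕ) : ∃ i, g j = g (i + 1) := by
  refine ⟨j + (L - 1), (hg.eq_iff _ _).2 ?_⟩
  have := hg.three_le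
  rw [show j + (L - 1) + 1 = j + L by omega]
  simp [Nat.ModEq]

/-- `x` is the mod 2 indicator vector of the perfect matching of `G` in which the partner of every
vertex `v` is `m v`. -/
def IsPartner {V : Type*} [DecidableEq V] (G : SimpleGraph V) (x : Sym2 V → ZMod 2)
    (m : V → V) : Prop :=
  (∀ v, G.Adj v (m v)) ∧ ∀ v w, x s(v, w) = if w = m v then 1 else 0

/-- `x` is the mod 2 indicator vector of a perfect matching of `G`. -/
def IsPMVec {V : Type*} [DecidableEq V] (G : SimpleGraph V) (x : Sym2 V → ZMod 2) : Prop :=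
  ∃ m, IsPartner G x m

theorem isPMVec_of_rows {V : Type*} [DecidableEq V] {G : SimpleGraph V} {x : Sym2 V → ZMod 2}
    (h : ∀ v, ∃ w, G.Adj v w ∧ ∀ w', x s(v, w') = if w' = w then 1 else 0) : IsPMVec G x := by
  choose m hm using h
  exact ⟨m, fun v => (hm v).1, fun v => (hm v).2⟩

theorem IsPartner.invol {V : Type*} [DecidableEq V] {G : SimpleGraph V} {x : Sym2 V → ZMod 2}
    {m : V → V} (h : IsPartner G x m) (v : V) : m (m v) = v := by
  have h1 := h.2 v (m v)
  rw [Sym2.eq_swap, h.2 (m v) v] at h1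
  by_contra h2
  simp [Ne.symm h2] at h1

theorem exists_isPartner_of_isPM {V : Type*} [DecidableEq V] {G : SimpleGraph V}
    {M : Finset (Sym2 V)} (hM : IsPM G M) :
    ∃ m, IsPartner G (fun e => if e ∈ M then 1 else 0) m := by
  refine isPMVec_of_rows fun v => ?_
  obtain ⟨e, he⟩ := Finset.card_eq_one.1 (hM.2 v)
  have hmem : ∀ e', e' ∈ M ∧ v ∈ e' ↔ e' = e := by
    intro e'
    have := Finset.ext_iff.1 he e'
    simpa using this
  obtain ⟨heM, hve⟩ := (hmem e).2 rfl
  obtain ⟨w, rfl⟩ := Sym2.mem_iff_exists.1 hve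
  refine ⟨w, hM.1 _ heM, fun w' => ?_⟩
  have := hmem s(v, w')
  simp only [Sym2.mem_iff, true_or, and_true, Sym2.congr_right] at this
  simp [this]

theorem IsPartner.even_card {V : Type*} [Fintype V] [DecidableEq V] {G : SimpleGraph V}
    {x : Sym2 V → ZMod 2} {m : V → V} (h : IsPartner G x m) : Even (Fintype.card V) := by
  have : ∑ _v : V, (1 : ZMod 2) = 0 :=
    Finset.sum_involution (fun v _ => m v) (fun _ _ => CharTwo.add_self_eq_zero _)
      (fun v _ _ => (h.1 v).ne') (fun _ _ => Finset.mem_univ _) (fun v _ => h.invol v)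
  rw [← ZMod.natCast_eq_zero_iff_even]
  simpa using this

open Classical in
/-- Given a matching `m` of the vertices off an even cycle, the edges of `m` and every second edge of
the cycle form a perfect matching. -/
theorem alternating_isPMVec {V : Type*} [DecidableEq V] {G : SimpleGraph V} {k : ℕ} {g : ℕ → V}
    (hg : CycSeq G (2 * k) g) (m : V → V) (hout : ∀ v i, (∀ j, v ≠ g j) → m v ≠ g i)
    (hadj : ∀ v, (∀ j, v ≠ g j) → G.Adj v (m v)) (hinv : ∀ v, (∀ j, v ≠ g j) → m (m v) = v) :
    IsPMVec G (fun e => if (∃ v, (∀ j, v ≠ g j) ∧ e = s(v, m v)) ∨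
      (∃ i, e = s(g (2 * i), g (2 * i + 1))) then 1 else 0) := by
  refine isPMVec_of_rows fun v => ?_
  by_cases hv : ∀ j, v ≠ g j
  · refine ⟨m v, hadj v hv, fun w => if_congr ?_ rfl rfl⟩
    constructor
    · rintro (⟨a, ha, h⟩ | ⟨i, h⟩)
      · rcases Sym2.eq_iff.1 h with ⟨rfl, rfl⟩ | ⟨rfl, rfl⟩
        · rfl
        · exact (hinv _ ha).symm
      · rcases Sym2.eq_iff.1 h with ⟨h, _⟩ | ⟨h, _⟩ <;> exact absurd h (hv _)
    · rintro rfl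
      exact Or.inl ⟨v, hv, rfl⟩
  · push Not at hv
    obtain ⟨j, rfl⟩ := hv
    have hno : ∀ w, ¬ ∃ v, (∀ j, v ≠ g j) ∧ s(g j, w) = s(v, m v) := by
      rintro w ⟨a, ha, h⟩
      rcases Sym2.eq_iff.1 h with ⟨h, _⟩ | ⟨h, _⟩
      · exact ha _ h.symm
      · exact hout a _ ha h.symm
    obtain ⟨t, rfl | rfl⟩ := Nat.even_or_odd' j
    · refine ⟨g (2 * t + 1), hg.adj _, fun w => if_congr ?_ rfl rfl⟩
      simp only [hno, false_or]
      constructor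
      · rintro ⟨i, h⟩
        rcases Sym2.eq_iff.1 h with ⟨h', rfl⟩ | ⟨h', _⟩
        · exact hg.succ_eq.2 h'.symm
        · have := hg.parity h'
          omega
      · rintro rfl
        exact ⟨t, rfl⟩
    · refine ⟨g (2 * t), (hg.adj _).symm, fun w => if_congr ?_ rfl rfl⟩
      simp only [hno, false_or]
      constructor
      · rintro ⟨i, h⟩
        rcases Sym2.eq_iff.1 h with ⟨h', _⟩ | ⟨h', rfl⟩
        · have := hg.parity h'
          omega
        · exact (hg.succ_eq.1 h').symm
      · rintro rfl
        exact ⟨t, Sym2.eq_swap⟩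

/-- Both `G` and `G - V(c)` have an even number of vertices, hence so has `c`. -/
theorem IsIndep.even_length {V : Type*} [Fintype V] [DecidableEq V] {G : SimpleGraph V} {u : V}
    {c : G.Walk u u} (hc : c.IsCycle) (hi : IsIndep G c) (hpm : HasPM G) : Even c.length := by
  classical
  obtain ⟨M, hM⟩ := hpm
  obtain ⟨M', hM'⟩ := hi
  obtain ⟨m, hm⟩ := exists_isPartner_of_isPM hM
  obtain ⟨m', hm'⟩ := exists_isPartner_of_isPM hM'
  have h1 := hm.even_card
  have h2 := hm'.even_card
  obtain ⟨g, hg, -, hs, -⟩ := exists_cycSeq hc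
  have hL := hg.three_le
  have h3 : Fintype.card {x // x ∈ c.support} = c.length := by
    rw [Fintype.card_subtype, show Finset.univ.filter (· ∈ c.support) =
      (Finset.range c.length).image g from ?_, Finset.card_image_of_injOn, Finset.card_range]
    · intro i hi j hj h
      exact ((hg.eq_iff i j).1 h).eq_of_lt_of_lt (by simpa using hi) (by simpa using hj)
    · ext v
      simp only [Finset.mem_filter, Finset.mem_univ, true_and, hs, Finset.mem_image,
        Finset.mem_range]
      constructor
      · rintro ⟨i, rfl⟩
        exact ⟨i % c.length, Nat.mod_lt _ (by omega), (hg.eq_iff _ _).2 (Nat.mod_modEq _ _)⟩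
      · rintro ⟨i, _, rfl⟩
        exact ⟨i, rfl⟩
  have h4 := Fintype.card_subtype_compl (fun x => x ∈ c.support)
  have h5 := Fintype.card_subtype_le (fun x => x ∈ c.support)
  have h6 : Fintype.card {x : V | x ∉ c.support} = Fintype.card {x // x ∉ c.support} :=
    Fintype.card_congr (Equiv.refl _)
  rw [h6] at h2
  rw [h3] at h4 h5
  rw [Nat.even_iff] at *
  omega

/-- The two perfect matchings of an even cycle, completed by a common perfect matching off the cycle,
differ exactly by the cycle. -/
theorem IsIndep.exists_pm {V : Type*} [Fintype V] [DecidableEq V] {G : SimpleGraph V} {u : V}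
    {c : G.Walk u u} (hc : c.IsCycle) (hi : IsIndep G c) (hpm : HasPM G) :
    ∃ x, IsPMVec G x ∧ IsPMVec G (x + walkVec c) := by
  classical
  obtain ⟨k, hk⟩ := (IsIndep.even_length hc hi hpm).two_dvd
  obtain ⟨g, hg, he, hs, -⟩ := exists_cycSeq hc
  rw [hk] at hg
  obtain ⟨M, hM⟩ := hi
  obtain ⟨m₀, hm₀⟩ := exists_isPartner_of_isPM hM
  have hsupp : ∀ v, (∀ j, v ≠ g j) ↔ v ∉ c.support := by
    intro v; rw [hs]; push Not; rfl
  set m : V → V := fun v => if h : v ∉ c.support then (m₀ ⟨v, h⟩).1 else v with hm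
  have hmout : ∀ v (h : v ∉ c.support), m v = (m₀ ⟨v, h⟩).1 := fun v h => by simp [hm, h]
  have hout : ∀ v i, (∀ j, v ≠ g j) → m v ≠ g i := by
    intro v i hv
    rw [hsupp] at hv
    rw [hmout v hv]
    exact (hsupp _).2 (m₀ ⟨v, hv⟩).2 i
  have hadj : ∀ v, (∀ j, v ≠ g j) → G.Adj v (m v) := by
    intro v hv
    rw [hsupp] at hv
    rw [hmout v hv]
    exact hm₀.1 ⟨v, hv⟩
  have hinv : ∀ v, (∀ j, v ≠ g j) → m (m v) = v := by
    intro v hv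
    rw [hsupp] at hv
    rw [hmout v hv, hmout _ (m₀ ⟨v, hv⟩).2]
    exact congrArg Subtype.val (hm₀.invol ⟨v, hv⟩)
  have hsh : ∀ v, (∀ j, v ≠ g (j + 1)) ↔ ∀ j, v ≠ g j := by
    refine fun v => ⟨fun h j => ?_, fun h j => h _⟩
    obtain ⟨i, hi⟩ := hg.exists_succ j
    rw [hi]
    exact h i
  have h1 := alternating_isPMVec hg m hout hadj hinv
  have h2 := alternating_isPMVec hg.shift m (fun v i hv => hout v _ ((hsh v).1 hv))
    (fun v hv => hadj v ((hsh v).1 hv)) (fun v hv => hinv v ((hsh v).1 hv))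
  refine ⟨_, h1, ?_⟩
  convert h2 using 1
  funext e
  simp only [Pi.add_apply, walkVec_of_isCycle hc, he, hsh]
  by_cases hA : ∃ v, (∀ j, v ≠ g j) ∧ e = s(v, m v)
  · have : ¬ ∃ i, e = s(g i, g (i + 1)) := by
      rintro ⟨i, hi⟩
      obtain ⟨v, hv, hev⟩ := hA
      rw [hev] at hi
      rcases Sym2.eq_iff.1 hi with ⟨h, _⟩ | ⟨h, _⟩ <;> exact hv _ h
    simp [hA, this]
  · by_cases hE : ∃ i, e = s(g (2 * i), g (2 * i + 1))
    · have h3 : ∃ i, e = s(g i, g (i + 1)) := by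
        obtain ⟨i, hi⟩ := hE
        exact ⟨_, hi⟩
      have h4 : ¬ ∃ i, e = s(g (2 * i + 1), g (2 * i + 1 + 1)) := by
        rintro ⟨i, hi⟩
        obtain ⟨j, hj⟩ := hE
        rw [hj] at hi
        rcases Sym2.eq_iff.1 hi with ⟨h, _⟩ | ⟨h, h'⟩
        · have := hg.parity h
          omega
        · exact hg.ne_add_two _ ((hg.succ_eq.1 h').symm.trans h)
      simp only [hA, hE, h3, h4, or_true, if_true, or_false, if_false]
      exact CharTwo.add_self_eq_zero _
    · have h3 : (∃ i, e = s(g i, g (i + 1))) ↔ ∃ i, e = s(g (2 * i + 1), g (2 * i + 1 + 1)) := by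
        constructor
        · rintro ⟨i, hi⟩
          obtain ⟨t, rfl | rfl⟩ := Nat.even_or_odd' i
          · exact absurd ⟨t, hi⟩ hE
          · exact ⟨t, hi⟩
        · rintro ⟨i, hi⟩
          exact ⟨_, hi⟩
      simp only [hA, hE, h3, or_self, if_false, zero_add, false_or]

/-! ### The three perfect matchings and bipartiteness -/

theorem IsPMVec.isEvenSet_add {V : Type*} [Fintype V] [DecidableEq V] {G : SimpleGraph V}
    {x y : Sym2 V → ZMod 2} (hx : IsPMVec G x) (hy : IsPMVec G y) : IsEvenSet G (x + y) := by
  obtain ⟨m, hm⟩ := hx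
  obtain ⟨m', hm'⟩ := hy
  refine ⟨fun e he => ?_, fun v => ?_⟩
  · induction e with
    | _ v w =>
      by_cases h : w = m v
      · subst h; exact hm.1 v
      · by_cases h' : w = m' v
        · subst h'; exact hm'.1 v
        · simp [hm.2, hm'.2, h, h'] at he
  · simp [hm.2, hm'.2, Finset.sum_add_distrib, CharTwo.add_self_eq_zero]

/-- The only nonzero even set contained in a cycle is the cycle itself: evenness at each vertex of the
cycle propagates the value of `f` from one edge to the next. -/
theorem eq_walkVec_of_subset {V : Type*} [Fintype V] [DecidableEq V] {G : SimpleGraph V} {u : V}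
    {c : G.Walk u u} (hc : c.IsCycle) {f : Sym2 V → ZMod 2} (hf : IsEvenSet G f)
    (hsub : ∀ e, f e ≠ 0 → e ∈ c.edges) (hf0 : f ≠ 0) : f = walkVec c := by
  obtain ⟨g, hg, he, hs, -⟩ := exists_cycSeq hc
  have hstep : ∀ i, f s(g i, g (i + 1)) = f s(g (i + 1), g (i + 2)) := by
    intro i
    have h := hf.2 (g (i + 1))
    rw [← Finset.sum_subset (Finset.subset_univ {g i, g (i + 2)}),
      Finset.sum_pair (hg.ne_add_two i)] at h
    · rw [Sym2.eq_swap]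
      exact CharTwo.add_eq_zero.1 h
    · intro w _ hw
      by_contra h0
      obtain ⟨j, hj⟩ := (he _).1 (hsub _ h0)
      apply hw
      rcases Sym2.eq_iff.1 hj with ⟨h1, rfl⟩ | ⟨h1, rfl⟩
      · simp [hg.succ_eq.2 h1.symm]
      · simp [hg.succ_eq.1 h1.symm]
  have hconst : ∀ i, f s(g i, g (i + 1)) = f s(g 0, g 1) := by
    intro i
    induction i with
    | zero => rfl
    | succ i ih => rw [← ih, hstep i]
  have h2 : ∀ a : ZMod 2, a ≠ 0 → a = 1 := by decide
  obtain ⟨e, hfe⟩ := Function.ne_iff.1 hf0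
  obtain ⟨j, hj⟩ := (he _).1 (hsub e hfe)
  have h1 : f s(g 0, g 1) = 1 := by
    rw [← hconst j, ← hj]; exact h2 _ hfe
  funext e'
  rw [walkVec_of_isCycle hc]
  split_ifs with h
  · obtain ⟨i, rfl⟩ := (he _).1 h
    rw [hconst, h1]
  · by_contra h'
    exact h (hsub _ h')

/-- If `x`, `x + κ`, `x + δ` and `x + κ + δ` are all perfect matchings, then the intersection of `κ`
and `δ` is an even set. At a vertex `v`, let `a`, `b`, `c` be its partners in the first three
matchings: the fourth has degree one only if two of these agree, and then `κ` and `δ` share an even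
number of edges at `v`. -/
theorem isEvenSet_mul {V : Type*} [Fintype V] [DecidableEq V] {G : SimpleGraph V}
    {x κ δ : Sym2 V → ZMod 2} (h1 : IsPMVec G x) (h2 : IsPMVec G (x + κ)) (h3 : IsPMVec G (x + δ))
    (h4 : IsPMVec G (x + κ + δ)) : IsEvenSet G (κ * δ) := by
  have hκ : IsEvenSet G κ := by
    have h := h1.isEvenSet_add h2
    rwa [← add_assoc, vec_add_self, zero_add] at h
  refine ⟨fun e he => hκ.1 e fun h => he (by simp [h]), fun v => ?_⟩
  obtain ⟨a, ha⟩ := h1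
  obtain ⟨b, hb⟩ := h2
  obtain ⟨c, hc⟩ := h3
  obtain ⟨d, hd⟩ := h4
  have ea : ∀ w, x s(v, w) = if w = a v then 1 else 0 := ha.2 v
  have eb : ∀ w, κ s(v, w) = (if w = a v then 1 else 0) + if w = b v then 1 else 0 := by
    intro w
    have := hb.2 v w
    rw [Pi.add_apply, ea] at this
    rw [← this, ← add_assoc, CharTwo.add_self_eq_zero, zero_add]
  have ec : ∀ w, δ s(v, w) = (if w = a v then 1 else 0) + if w = c v then 1 else 0 := by
    intro w
    have := hc.2 v w
    rw [Pi.add_apply, ea] at this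
    rw [← this, ← add_assoc, CharTwo.add_self_eq_zero, zero_add]
  by_cases hab : a v = b v
  · refine Finset.sum_eq_zero fun w _ => ?_
    rw [Pi.mul_apply, eb, hab, CharTwo.add_self_eq_zero, zero_mul]
  by_cases hac : a v = c v
  · refine Finset.sum_eq_zero fun w _ => ?_
    rw [Pi.mul_apply, ec, hac, CharTwo.add_self_eq_zero, mul_zero]
  by_cases hbc : b v = c v
  · rw [← hκ.2 v]
    refine Finset.sum_congr rfl fun w _ => ?_
    rw [Pi.mul_apply, eb, ec, hbc]
    generalize (if w = a v then (1 : ZMod 2) else 0) + (if w = c v then 1 else 0) = t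
    revert t; decide
  -- With three distinct partners the fourth vector would have three edges at `v`.
  · exfalso
    have hda := hd.2 v (a v)
    have hdb := hd.2 v (b v)
    simp only [Pi.add_apply, ea, eb, ec, hab, hac, hbc, Ne.symm hab, if_true, if_false] at hda hdb
    have h5 : a v = d v := by
      by_contra h
      rw [if_neg h] at hda
      revert hda; decide
    have h6 : b v = d v := by
      by_contra h
      rw [if_neg h] at hdb
      revert hdb; decide
    exact hab (h5.trans h6.symm)

theorem sameCycle_of_walkVec_eq {V : Type*} [DecidableEq V] {G : SimpleGraph V} {u v : V}
    {c : G.Walk u u} {d : G.Walk v v} (hc : c.IsCycle) (hd : d.IsCycle)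
    (h : walkVec c = walkVec d) : SameCycle c d := by
  ext e
  have := congrFun h e
  rw [walkVec_of_isCycle hc, walkVec_of_isCycle hd] at this
  simp only [List.mem_toFinset]
  split_ifs at this with h1 h2 h2 <;> simp_all

theorem walkVec_ne_zero {V : Type*} [DecidableEq V] {G : SimpleGraph V} {u : V}
    {c : G.Walk u u} (hc : c.IsCycle) : walkVec c ≠ 0 := by
  obtain ⟨g, hg, he, -⟩ := exists_cycSeq hc
  intro h
  have := congrFun h s(g 0, g 1)
  rw [walkVec_of_isCycle hc, if_pos ((he _).2 ⟨0, rfl⟩)] at this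
  simp at this

/-- A θ-type bicyclic graph with all cycles independent has exactly three perfect matchings. Two
cycles `c`, `d` sharing an edge span the cycle space. If the fourth vector `x + c + d` were a
matching too, `c ∩ d` would be a nonempty even set inside both cycles, hence equal to both. -/
theorem exists_three_pms {V : Type*} [Fintype V] [DecidableEq V] {G : SimpleGraph V}
    (hG : Bicyclic V G) (hθ : ThetaType G) (hpm : HasPM G)
    (hind : ∀ (u : V) (c : G.Walk u u), c.IsCycle → IsIndep G c) :
    ∃ (x : Sym2 V → ZMod 2) (u v : V) (c : G.Walk u u) (d : G.Walk v v), c.IsCycle ∧ d.IsCycle ∧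
      walkVec c ≠ walkVec d ∧ IsPMVec G x ∧ IsPMVec G (x + walkVec c) ∧
      IsPMVec G (x + walkVec d) ∧
      ∀ y, IsPMVec G y → y = x ∨ y = x + walkVec c ∨ y = x + walkVec d := by
  unfold ThetaType InfinityType at hθ
  push Not at hθ
  obtain ⟨u, v, c, d, hc, hd, hcd, e, hec, hed⟩ := hθ
  have hne : walkVec c ≠ walkVec d := fun h => hcd (sameCycle_of_walkVec_eq hc hd h)
  obtain ⟨x, hx, hxc⟩ := IsIndep.exists_pm hc (hind u c hc) hpm
  obtain ⟨y, hy, hyd⟩ := IsIndep.exists_pm hd (hind v d hd) hpm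
  set κ := walkVec c with hκ
  set δ := walkVec d with hδ
  have hspan := fun {f : Sym2 V → ZMod 2} (hf : IsEvenSet G f) =>
    IsEvenSet.cases hG hf (walkVec_isEvenSet c) (walkVec_isEvenSet d)
      (walkVec_ne_zero hc) (walkVec_ne_zero hd) hne
  have hspan' : ∀ {a b : Sym2 V → ZMod 2}, IsPMVec G a → IsPMVec G b →
      b = a ∨ b = a + κ ∨ b = a + δ ∨ b = a + κ + δ := by
    intro a b ha hb
    have hba : b = a + (a + b) := by rw [← add_assoc, vec_add_self, zero_add]
    rcases hspan (ha.isEvenSet_add hb) with h | h | h | h <;> rw [h] at hba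
    · left; simpa using hba
    · right; left; exact hba
    · right; right; left; exact hba
    · right; right; right; rw [add_assoc]; exact hba
  have key : ∃ x, IsPMVec G x ∧ IsPMVec G (x + κ) ∧ IsPMVec G (x + δ) := by
    have hκκ : ∀ z : Sym2 V → ZMod 2, z + κ + κ = z := fun z => by
      rw [add_assoc, vec_add_self, add_zero]
    have hδδ : ∀ z : Sym2 V → ZMod 2, z + δ + δ = z := fun z => by
      rw [add_assoc, vec_add_self, add_zero]
    rcases hspan' hx hy with rfl | rfl | rfl | rfl
    · exact ⟨_, hx, hxc, hyd⟩
    · exact ⟨_, hxc, by rwa [hκκ], hyd⟩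
    · exact ⟨_, hx, hxc, hy⟩
    · exact ⟨_, hxc, by rwa [hκκ], hy⟩
  obtain ⟨x, hx, hxc, hxd⟩ := key
  refine ⟨x, u, v, c, d, hc, hd, hne, hx, hxc, hxd, fun z hz => ?_⟩
  rcases hspan' hx hz with h | h | h | h
  · exact Or.inl h
  · exact Or.inr (Or.inl h)
  · exact Or.inr (Or.inr h)
  · exfalso
    rw [h] at hz
    have hev := isEvenSet_mul hx hxc hxd hz
    have h0 : κ * δ ≠ 0 := by
      intro h0
      have := congrFun h0 e
      rw [Pi.mul_apply, hκ, hδ, walkVec_of_isCycle hc, walkVec_of_isCycle hd, if_pos hec,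
        if_pos hed] at this
      simp at this
    have h1 : κ * δ = κ := eq_walkVec_of_subset hc hev (fun e he => by
      by_contra h; simp [hκ, walkVec_of_isCycle hc, h] at he) h0
    have h2 : κ * δ = δ := eq_walkVec_of_subset hd hev (fun e he => by
      by_contra h; simp [hδ, walkVec_of_isCycle hd, h] at he) h0
    exact hne (h1.symm.trans h2)

/-- Every closed walk is, mod 2, a combination of two even cycles and hence has even length. -/
theorem two_colorable {V : Type*} [Fintype V] [DecidableEq V] {G : SimpleGraph V}
    (hG : Bicyclic V G) (hpm : HasPM G)
    (hind : ∀ (u : V) (c : G.Walk u u), c.IsCycle → IsIndep G c)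
    {u v : V} {c : G.Walk u u} {d : G.Walk v v} (hc : c.IsCycle) (hd : d.IsCycle)
    (hne : walkVec c ≠ walkVec d) : G.Colorable 2 := by
  rw [two_colorable_iff_forall_loop_even]
  intro a w
  have hc' := IsIndep.even_length hc (hind _ c hc) hpm
  have hd' := IsIndep.even_length hd (hind _ d hd) hpm
  rw [← ZMod.natCast_eq_zero_iff_even, ← walkVec_sum] at hc' hd' ⊢
  rcases IsEvenSet.cases hG (walkVec_isEvenSet w) (walkVec_isEvenSet c) (walkVec_isEvenSet d)
      (walkVec_ne_zero hc) (walkVec_ne_zero hd) hne with h | h | h | h <;> rw [h]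
  · simp
  · exact hc'
  · exact hd'
  · simp [Finset.sum_add_distrib, hc', hd']

/-! ### The bipartite determinant -/

/-- `p` and `q` parametrize, by the same index type `X`, two independent sets of `G` that partition
the vertex set; so `G` is bipartite with sides of equal size. -/
structure Bipart {V X : Type*} (G : SimpleGraph V) (p q : X → V) : Prop where
  bij : Function.Bijective (Sum.elim p q : X ⊕ X → V)
  not_adj_p : ∀ a b, ¬ G.Adj (p a) (p b)
  not_adj_q : ∀ a b, ¬ G.Adj (q a) (q b)

namespace Bipart

variable {V X : Type*} {G : SimpleGraph V} {p q : X → V}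

theorem p_inj (h : Bipart G p q) : Function.Injective p := fun a b hab =>
  Sum.inl_injective (h.bij.1 (a₁ := Sum.inl a) (a₂ := Sum.inl b) hab)

theorem q_inj (h : Bipart G p q) : Function.Injective q := fun a b hab =>
  Sum.inr_injective (h.bij.1 (a₁ := Sum.inr a) (a₂ := Sum.inr b) hab)

theorem p_ne_q (h : Bipart G p q) (a b : X) : p a ≠ q b := fun hab => by
  have := h.bij.1 (a₁ := Sum.inl a) (a₂ := Sum.inr b) hab
  simp at this

theorem cases (h : Bipart G p q) (v : V) : (∃ a, v = p a) ∨ ∃ a, v = q a := by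
  obtain ⟨a | a, rfl⟩ := h.bij.2 v
  · exact Or.inl ⟨a, rfl⟩
  · exact Or.inr ⟨a, rfl⟩

theorem adj_p (h : Bipart G p q) {a : X} {v : V} (hv : G.Adj (p a) v) : ∃ b, v = q b := by
  rcases h.cases v with ⟨b, rfl⟩ | hb
  · exact absurd hv (h.not_adj_p _ _)
  · exact hb

theorem adj_q (h : Bipart G p q) {a : X} {v : V} (hv : G.Adj (q a) v) : ∃ b, v = p b := by
  rcases h.cases v with hb | ⟨b, rfl⟩
  · exact hb
  · exact absurd hv (h.not_adj_q _ _)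

end Bipart

open Classical in
/-- The indicator vector of the edge set `{p a, q (σ a)}`, `a : X`, attached to a permutation `σ`. -/
noncomputable def permVec {V X : Type*} (p q : X → V) (σ : Equiv.Perm X) : Sym2 V → ZMod 2 :=
  fun e => if ∃ a, e = s(p a, q (σ a)) then 1 else 0

theorem permVec_p {V X : Type*} [DecidableEq V] {G : SimpleGraph V} {p q : X → V}
    (h : Bipart G p q) (σ : Equiv.Perm X) (a : X) (w : V) :
    permVec p q σ s(p a, w) = if w = q (σ a) then 1 else 0 := by
  classical
  unfold permVec
  refine if_congr ⟨?_, ?_⟩ rfl rfl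
  · rintro ⟨b, hb⟩
    rcases Sym2.eq_iff.1 hb with ⟨h1, rfl⟩ | ⟨h1, _⟩
    · rw [h.p_inj h1]
    · exact absurd h1 (h.p_ne_q _ _)
  · rintro rfl
    exact ⟨a, rfl⟩

theorem permVec_q {V X : Type*} [DecidableEq V] {G : SimpleGraph V} {p q : X → V}
    (h : Bipart G p q) (σ : Equiv.Perm X) (b : X) (w : V) :
    permVec p q σ s(q b, w) = if w = p (σ.symm b) then 1 else 0 := by
  classical
  unfold permVec
  refine if_congr ⟨?_, ?_⟩ rfl rfl
  · rintro ⟨a, ha⟩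
    rcases Sym2.eq_iff.1 ha with ⟨h1, _⟩ | ⟨h1, rfl⟩
    · exact absurd h1.symm (h.p_ne_q _ _)
    · rw [h.q_inj h1, Equiv.symm_apply_apply]
  · rintro rfl
    exact ⟨σ.symm b, by rw [Equiv.apply_symm_apply, Sym2.eq_swap]⟩

theorem permVec_injective {V X : Type*} [DecidableEq V] {G : SimpleGraph V} {p q : X → V}
    (h : Bipart G p q) : Function.Injective (permVec p q) := by
  intro σ τ hστ
  ext a
  have := congrFun hστ s(p a, q (σ a))
  rw [permVec_p h, permVec_p h, if_pos rfl] at this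
  by_contra hne
  rw [if_neg fun h' => hne (h.q_inj h')] at this
  simp at this

theorem permVec_isPMVec {V X : Type*} [DecidableEq V] {G : SimpleGraph V} {p q : X → V}
    (h : Bipart G p q) {σ : Equiv.Perm X} (hσ : ∀ a, G.Adj (p a) (q (σ a))) :
    IsPMVec G (permVec p q σ) := by
  refine isPMVec_of_rows fun v => ?_
  rcases h.cases v with ⟨a, rfl⟩ | ⟨b, rfl⟩
  · exact ⟨_, hσ a, permVec_p h σ a⟩
  · refine ⟨_, ?_, permVec_q h σ b⟩
    simpa using (hσ (σ.symm b)).symm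

/-- Every perfect matching of a bipartite graph comes from a permutation. -/
theorem IsPMVec.exists_perm {V X : Type*} [Finite X] [DecidableEq V] {G : SimpleGraph V}
    {p q : X → V} (h : Bipart G p q) {x : Sym2 V → ZMod 2} (hx : IsPMVec G x) :
    ∃ σ : Equiv.Perm X, (∀ a, G.Adj (p a) (q (σ a))) ∧ permVec p q σ = x := by
  obtain ⟨m, hm⟩ := hx
  choose f hf using fun a => h.adj_p (hm.1 (p a))
  have hinj : Function.Injective f := by
    intro a b hab
    apply h.p_inj
    rw [← hm.invol (p a), ← hm.invol (p b), hf, hf, hab]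
  refine ⟨Equiv.ofBijective f (Finite.injective_iff_bijective.1 hinj), fun a => ?_, ?_⟩
  · rw [Equiv.ofBijective_apply, ← hf]
    exact hm.1 _
  · set σ := Equiv.ofBijective f (Finite.injective_iff_bijective.1 hinj) with hσ
    have hfσ : ∀ a, m (p a) = q (σ a) := hf
    funext e
    induction e with
    | _ v w =>
      rcases h.cases v with ⟨a, rfl⟩ | ⟨b, rfl⟩
      · rw [permVec_p h, hm.2, hfσ]
      · rw [permVec_q h, hm.2]
        have : m (q b) = p (σ.symm b) := by
          rw [← hm.invol (p (σ.symm b)), hfσ, Equiv.apply_symm_apply]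
        rw [this]

theorem det_antidiagonal {X : Type*} [Fintype X] [DecidableEq X] (M N : Matrix X X ℂ) :
    (Matrix.fromBlocks 0 M N 0).det = (-1) ^ Fintype.card X * (M.det * N.det) := by
  have h1 : (Matrix.fromBlocks 0 M N 0 : Matrix (X ⊕ X) (X ⊕ X) ℂ) =
      Matrix.fromBlocks M 0 0 N * Matrix.fromBlocks 0 1 1 0 := by
    simp [Matrix.fromBlocks_multiply]
  have h2 : (Matrix.fromBlocks 0 1 1 0 : Matrix (X ⊕ X) (X ⊕ X) ℂ).det =
      (-1) ^ Fintype.card X := by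
    have h3 : (Matrix.fromBlocks 0 1 1 0 : Matrix (X ⊕ X) (X ⊕ X) ℂ) *
        Matrix.fromBlocks 1 0 1 1 = Matrix.fromBlocks 1 1 1 0 := by
      simp [Matrix.fromBlocks_multiply]
    have h4 := congrArg Matrix.det h3
    rw [Matrix.det_mul, Matrix.det_fromBlocks_zero₁₂, Matrix.det_fromBlocks_one₁₁] at h4
    simpa [Matrix.det_neg] using h4
  rw [h1, Matrix.det_mul, h2, Matrix.det_fromBlocks_zero₁₂, mul_comm]

/-- The term of `σ` in the Leibniz expansion of the determinant of the block `A (p a) (q b)`. -/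
noncomputable def permTerm {V X : Type*} [Fintype X] [DecidableEq X] (A : Matrix V V ℂ)
    (p q : X → V) (σ : Equiv.Perm X) : ℂ :=
  (Equiv.Perm.sign σ : ℂ) * ∏ a, A (p a) (q (σ a))

theorem ThreeColored.eq_zero {V : Type*} {G : SimpleGraph V} {A : Matrix V V ℂ}
    (hA : ThreeColored G A) {u v : V} (h : ¬ G.Adj u v) : A u v = 0 := by
  by_cases huv : u = v
  · rw [huv]; exact hA.2.1 v
  · exact hA.2.2.2 u v huv h

theorem ThreeColored.star_eq {V : Type*} {G : SimpleGraph V} {A : Matrix V V ℂ}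
    (hA : ThreeColored G A) (u v : V) : star (A u v) = A v u :=
  hA.1.apply v u

theorem ThreeColored.mul_swap {V : Type*} {G : SimpleGraph V} {A : Matrix V V ℂ}
    (hA : ThreeColored G A) {u v : V} (h : G.Adj u v) : A u v * A v u = 1 := by
  rw [← hA.star_eq u v]
  have := hA.2.2.1 u v h
  simp only [Set.mem_insert_iff, Set.mem_singleton_iff] at this
  rcases this with h | h | h | h <;> rw [h] <;> simp

/-- Along the bipartition `A` is block antidiagonal with blocks `N` and its conjugate transpose, so
`det A` is `|det N|²` up to sign. -/
theorem det_eq_normSq {V X : Type*} [Fintype V] [DecidableEq V] [Fintype X] [DecidableEq X]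
    {G : SimpleGraph V} {A : Matrix V V ℂ} (hA : ThreeColored G A) {p q : X → V}
    (h : Bipart G p q) :
    A.det = (-1) ^ Fintype.card X *
      ((∑ σ, permTerm A p q σ) * star (∑ σ, permTerm A p q σ)) := by
  set N : Matrix X X ℂ := Matrix.of fun a b => A (p a) (q b) with hN
  have hdet : N.det = ∑ σ, permTerm A p q σ := by
    rw [← Matrix.det_transpose, Matrix.det_apply']
    rfl
  have hblock : A.submatrix (Equiv.ofBijective _ h.bij) (Equiv.ofBijective _ h.bij) =
      Matrix.fromBlocks 0 N N.conjTranspose 0 := by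
    ext (a | a) (b | b)
    · simp [hA.eq_zero (h.not_adj_p a b)]
    · simp [hN]
    · simp only [Matrix.submatrix_apply, Equiv.ofBijective_apply, Sum.elim_inl, Sum.elim_inr,
        Matrix.fromBlocks_apply₂₁, Matrix.conjTranspose_apply, hN, Matrix.of_apply]
      rw [hA.star_eq]
    · simp [hA.eq_zero (h.not_adj_q a b)]
  rw [← Matrix.det_submatrix_equiv_self (Equiv.ofBijective _ h.bij) A, hblock, det_antidiagonal,
    Matrix.det_conjTranspose, hdet]

theorem permTerm_eq_zero {V X : Type*} [Fintype X] [DecidableEq X]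
    {G : SimpleGraph V} {A : Matrix V V ℂ} (hA : ThreeColored G A) {p q : X → V}
    {σ : Equiv.Perm X} (hσ : ¬ ∀ a, G.Adj (p a) (q (σ a))) : permTerm A p q σ = 0 := by
  push Not at hσ
  obtain ⟨a, ha⟩ := hσ
  rw [permTerm, Finset.prod_eq_zero (Finset.mem_univ a) (hA.eq_zero ha), mul_zero]

theorem sign_mul_self_complex {X : Type*} [Fintype X] [DecidableEq X] (σ : Equiv.Perm X) :
    ((Equiv.Perm.sign σ : ℤ) : ℂ) * ((Equiv.Perm.sign σ : ℤ) : ℂ) = 1 := by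
  rcases Int.units_eq_one_or (Equiv.Perm.sign σ) with h | h <;> simp [h]

theorem permTerm_mul_star_self {V X : Type*} [Fintype X] [DecidableEq X]
    {G : SimpleGraph V} {A : Matrix V V ℂ} (hA : ThreeColored G A) {p q : X → V}
    {σ : Equiv.Perm X} (hσ : ∀ a, G.Adj (p a) (q (σ a))) :
    permTerm A p q σ * star (permTerm A p q σ) = 1 := by
  rw [permTerm, star_mul', star_prod]
  have h1 : ∏ a, A (p a) (q (σ a)) * star (A (p a) (q (σ a))) = 1 :=
    Finset.prod_eq_one fun a _ => by rw [hA.star_eq, hA.mul_swap (hσ a)]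
  rw [Finset.prod_mul_distrib] at h1
  have h2 := sign_mul_self_complex σ
  have h3 : star ((Equiv.Perm.sign σ : ℤ) : ℂ) = ((Equiv.Perm.sign σ : ℤ) : ℂ) := by simp
  rw [h3, mul_mul_mul_comm, h1, h2, one_mul]

/-! ### Two perfect matchings differing by a cycle -/

/-- Along a cycle on which the matchings `x` and `y` are complementary, an edge of `x` is followed by
an edge of `y`. -/
theorem alternate {V : Type*} [DecidableEq V] {G : SimpleGraph V} {L : ℕ} {g : ℕ → V}
    (hg : CycSeq G L g) {x y : Sym2 V → ZMod 2} (hx : IsPMVec G x)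
    (hxy : ∀ i, x s(g i, g (i + 1)) + y s(g i, g (i + 1)) = 1) {i : ℕ}
    (hi : x s(g i, g (i + 1)) = 1) : y s(g (i + 1), g (i + 2)) = 1 := by
  obtain ⟨m, hm⟩ := hx
  rw [Sym2.eq_swap, hm.2] at hi
  have h1 : g i = m (g (i + 1)) := by
    by_contra h
    simp [h] at hi
  have h2 := hxy (i + 1)
  rw [hm.2, if_neg, zero_add] at h2
  · exact h2
  · rw [← h1]
    exact (hg.ne_add_two i).symm

/-- Let the matchings of `σ` and `τ` differ by an even cycle `g` which starts on the side `p` with an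
edge of `σ`. Then `τ⁻¹ σ` is a `k`-cycle along the even-indexed vertices of `g`, which gives the
sign, while the entries of `A` off the cycle cancel and those on it multiply to its weight. -/
theorem permTerm_mul_star {V X : Type*} [DecidableEq V] [Fintype X] [DecidableEq X]
    {G : SimpleGraph V} {A : Matrix V V ℂ} (hA : ThreeColored G A) {p q : X → V}
    (h : Bipart G p q) {σ τ : Equiv.Perm X} (hσ : ∀ a, G.Adj (p a) (q (σ a)))
    (hτ : ∀ a, G.Adj (p a) (q (τ a))) {k : ℕ} {g : ℕ → V} (hg : CycSeq G (2 * k) g)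
    (hon : ∀ i, permVec p q σ s(g i, g (i + 1)) + permVec p q τ s(g i, g (i + 1)) = 1)
    (hoff : ∀ e, (¬ ∃ i, e = s(g i, g (i + 1))) → permVec p q σ e + permVec p q τ e = 0)
    (h0 : ∃ a, g 0 = p a) (hstart : permVec p q σ s(g 0, g 1) = 1) :
    permTerm A p q σ * star (permTerm A p q τ) =
      -(-1) ^ k * ∏ i ∈ Finset.range (2 * k), A (g i) (g (i + 1)) := by
  have hk : 2 ≤ k := by have := hg.three_le; omega
  have hon' : ∀ i, permVec p q τ s(g i, g (i + 1)) + permVec p q σ s(g i, g (i + 1)) = 1 :=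
    fun i => by rw [add_comm, hon]
  have hσ1 : ∀ i, permVec p q σ s(g (2 * i), g (2 * i + 1)) = 1 := by
    intro i
    induction i with
    | zero => exact hstart
    | succ i ih =>
      exact alternate hg (permVec_isPMVec h hτ) hon'
        (alternate hg (permVec_isPMVec h hσ) hon ih)
  have hτ1 : ∀ i, permVec p q τ s(g (2 * i + 1), g (2 * i + 2)) = 1 := fun i =>
    alternate hg (permVec_isPMVec h hσ) hon (hσ1 i)
  have hp : ∀ i, ∃ a, g (2 * i) = p a := by
    intro i
    induction i with
    | zero => exact h0
    | succ i ih =>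
      obtain ⟨a, ha⟩ := ih
      have h1 := hg.adj (2 * i)
      rw [ha] at h1
      obtain ⟨b, hb⟩ := h.adj_p h1
      have h2 := hg.adj (2 * i + 1)
      rw [hb] at h2
      exact h.adj_q h2
  choose α hα using hp
  have hqσ : ∀ i, g (2 * i + 1) = q (σ (α i)) := by
    intro i
    have h1 := hσ1 i
    rw [hα, permVec_p h] at h1
    by_contra hne
    simp [hne] at h1
  have hqτ : ∀ i, g (2 * i + 1) = q (τ (α (i + 1))) := by
    intro i
    have h1 := hτ1 i
    rw [show 2 * i + 2 = 2 * (i + 1) by ring, Sym2.eq_swap, hα, permVec_p h] at h1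
    by_contra hne
    simp [hne] at h1
  set π : Equiv.Perm X := τ⁻¹ * σ with hπ
  have hπτ : ∀ a, τ (π a) = σ a := fun a => by simp [hπ]
  have hπα : ∀ i, π (α i) = α (i + 1) := by
    intro i
    apply τ.injective
    rw [hπτ]
    exact h.q_inj ((hqσ i).symm.trans (hqτ i))
  have hαinj : ∀ i j, α i = α j ↔ i ≡ j [MOD k] := by
    intro i j
    rw [← h.p_inj.eq_iff, ← hα, ← hα, hg.eq_iff]
    exact Nat.ModEq.mul_left_cancel_iff' (by norm_num)
  have hπfix : ∀ a, (∀ i, a ≠ α i) → π a = a := by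
    intro a ha
    apply τ.injective
    rw [hπτ]
    have hnot : ¬ ∃ i, s(p a, q (σ a)) = s(g i, g (i + 1)) := by
      have hpa : ∀ j, p a ≠ g j := by
        intro j hj
        obtain ⟨t, rfl | rfl⟩ := Nat.even_or_odd' j
        · rw [hα] at hj
          exact ha t (h.p_inj hj)
        · rw [hqσ] at hj
          exact h.p_ne_q _ _ hj
      rintro ⟨i, hi⟩
      rcases Sym2.eq_iff.1 hi with ⟨h1, _⟩ | ⟨h1, _⟩ <;> exact hpa _ h1
    have h1 := hoff _ hnot
    rw [permVec_p h, permVec_p h, if_pos rfl] at h1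
    by_contra hne
    rw [if_neg fun h' => hne (h.q_inj h')] at h1
    simp at h1
  have hmove : ∀ i, π (α i) ≠ α i := by
    intro i hi
    rw [hπα, hαinj] at hi
    have := (Nat.modEq_iff_dvd' (by omega)).1 hi.symm
    have := Nat.le_of_dvd (by omega) this
    omega
  have hαmod : ∀ i, α i = α (i % k) := fun i => (hαinj _ _).2 (Nat.mod_modEq _ _).symm
  have hαinjOn : Set.InjOn α (Finset.range k : Set ℕ) := by
    intro i hi j hj hij
    exact ((hαinj i j).1 hij).eq_of_lt_of_lt (by simpa using hi) (by simpa using hj)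
  have hrange : ∀ a, (∃ i, a = α i) ↔ a ∈ (Finset.range k).image α := by
    intro a
    rw [Finset.mem_image]
    constructor
    · rintro ⟨i, rfl⟩
      exact ⟨i % k, Finset.mem_range.2 (Nat.mod_lt _ (by omega)), (hαmod i).symm⟩
    · rintro ⟨i, _, rfl⟩
      exact ⟨i, rfl⟩
  have hsupp : π.support = (Finset.range k).image α := by
    ext a
    rw [Equiv.Perm.mem_support, ← hrange]
    constructor
    · intro hne
      by_contra hno
      push Not at hno
      exact hne (hπfix a hno)
    · rintro ⟨i, rfl⟩
      exact hmove i
  have hcycle : π.IsCycle := by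
    refine ⟨α 0, hmove 0, fun b hb => ?_⟩
    rw [← Equiv.Perm.mem_support, hsupp, ← hrange] at hb
    obtain ⟨i, rfl⟩ := hb
    refine ⟨i, ?_⟩
    rw [zpow_natCast]
    induction i with
    | zero => rfl
    | succ i ih => rw [pow_succ', Equiv.Perm.mul_apply, ih, hπα]
  have hsign : ((Equiv.Perm.sign σ : ℤ) : ℂ) * ((Equiv.Perm.sign τ : ℤ) : ℂ) = -(-1) ^ k := by
    have h1 : Equiv.Perm.sign π = -(-1) ^ k := by
      rw [hcycle.sign, hsupp, Finset.card_image_of_injOn hαinjOn, Finset.card_range]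
    have h2 : Equiv.Perm.sign σ * Equiv.Perm.sign τ = -(-1) ^ k := by
      rw [← h1, hπ, Equiv.Perm.sign_mul, Equiv.Perm.sign_inv, mul_comm]
    have h3 := congrArg (fun z : ℤˣ => ((z : ℤ) : ℂ)) h2
    simpa using h3
  have hprod : (∏ a, A (p a) (q (σ a))) * star (∏ a, A (p a) (q (τ a))) =
      ∏ i ∈ Finset.range (2 * k), A (g i) (g (i + 1)) := by
    have h1 : star (∏ a, A (p a) (q (τ a))) = ∏ a, A (q (σ a)) (p (π a)) := by
      rw [star_prod]
      simp only [hA.star_eq]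
      rw [← Equiv.prod_comp π]
      simp only [hπτ]
    have h2 : ∀ n, ∏ i ∈ Finset.range n, (A (g (2 * i)) (g (2 * i + 1)) *
        A (g (2 * i + 1)) (g (2 * i + 2))) = ∏ i ∈ Finset.range (2 * n), A (g i) (g (i + 1)) := by
      intro n
      induction n with
      | zero => simp
      | succ n ih =>
        rw [Finset.prod_range_succ, ih, show 2 * (n + 1) = 2 * n + 1 + 1 by ring,
          Finset.prod_range_succ, Finset.prod_range_succ, mul_assoc]
    rw [h1, ← Finset.prod_mul_distrib, ← h2,
      ← Finset.prod_subset (Finset.subset_univ ((Finset.range k).image α)),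
      Finset.prod_image hαinjOn]
    · refine Finset.prod_congr rfl fun i _ => ?_
      rw [hπα, ← hα, ← hα, ← hqσ]
      rfl
    · intro a _ ha
      rw [← hrange] at ha
      push Not at ha
      rw [hπfix a ha, hA.mul_swap (hσ a)]
  rw [permTerm, permTerm, star_mul', mul_mul_mul_comm, hprod, ← hsign]
  simp

/-- The weight of a cycle does not depend on the starting vertex. -/
theorem CycSeq.prod_shift {V : Type*} {G : SimpleGraph V} {L : ℕ} {g : ℕ → V}
    (hg : CycSeq G L g) (A : Matrix V V ℂ) :
    ∏ i ∈ Finset.range L, A (g (i + 1)) (g (i + 1 + 1)) =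
      ∏ i ∈ Finset.range L, A (g i) (g (i + 1)) := by
  have h3 : g L = g 0 := (hg.eq_iff _ _).2 (by simp [Nat.ModEq])
  have h4 : g (L + 1) = g (0 + 1) := hg.succ_eq.2 h3
  obtain ⟨n, rfl⟩ : ∃ n, L = n + 1 := ⟨L - 1, by have := hg.three_le; omega⟩
  rw [Finset.prod_range_succ, Finset.prod_range_succ' (fun i => A (g i) (g (i + 1)))]
  rw [h3, h4]

/-- If two perfect matchings differ by a cycle `c`, the real part of the corresponding product of
terms depends on `c` only; taking real parts removes the choice of direction along `c`. -/
theorem re_permTerm_mul_star {V X : Type*} [DecidableEq V] [Fintype X] [DecidableEq X]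
    {G : SimpleGraph V} {A : Matrix V V ℂ} (hA : ThreeColored G A) {p q : X → V}
    (h : Bipart G p q) {σ τ : Equiv.Perm X} (hσ : ∀ a, G.Adj (p a) (q (σ a)))
    (hτ : ∀ a, G.Adj (p a) (q (τ a))) {u : V} {c : G.Walk u u} (hc : c.IsCycle)
    (hev : Even c.length) (hvec : permVec p q σ + permVec p q τ = walkVec c) :
    (permTerm A p q σ * star (permTerm A p q τ)).re =
      -(-1) ^ (c.length / 2) * (walkWeight A c).re := by
  obtain ⟨k, hk⟩ := hev.two_dvd
  obtain ⟨g, hg, he, -, hW⟩ := exists_cycSeq hc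
  rw [hW, hk, Nat.mul_div_cancel_left _ (by norm_num)]
  rw [hk] at hg
  have hon : ∀ i, permVec p q σ s(g i, g (i + 1)) + permVec p q τ s(g i, g (i + 1)) = 1 := by
    intro i
    rw [← Pi.add_apply, hvec, walkVec_of_isCycle hc, if_pos ((he _).2 ⟨i, rfl⟩)]
  have hoff : ∀ e, (¬ ∃ i, e = s(g i, g (i + 1))) →
      permVec p q σ e + permVec p q τ e = 0 := by
    intro e hne
    rw [← he] at hne
    rw [← Pi.add_apply, hvec, walkVec_of_isCycle hc, if_neg hne]
  clear hW he hvec hk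
  -- Starting one step later puts the initial vertex on the side `p`.
  wlog h0 : ∃ a, g 0 = p a generalizing g with H
  · obtain ⟨b, hb⟩ := (h.cases (g 0)).resolve_left h0
    have h1 := hg.adj 0
    rw [hb] at h1
    rw [← hg.prod_shift A]
    refine H _ hg.shift (fun i => hon _) (fun e hne => hoff e ?_) (h.adj_q h1)
    rintro ⟨i, hi⟩
    obtain ⟨j, hj⟩ := hg.exists_succ i
    exact hne ⟨j, by rw [hi, hj, hg.succ_eq.2 hj]⟩
  have hre : ∀ W : ℂ, (-(-1 : ℂ) ^ k * W).re = -(-1) ^ k * W.re := by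
    intro W
    rcases Nat.even_or_odd k with hk | hk <;> simp [hk.neg_one_pow]
  have h2 : ∀ a b : ZMod 2, a + b = 1 → a = 1 ∨ b = 1 := by decide
  rcases h2 _ _ (hon 0) with hs | hs
  · rw [permTerm_mul_star hA h hσ hτ hg hon hoff h0 hs, hre]
  · have h3 := permTerm_mul_star hA h hτ hσ hg (fun i => by rw [add_comm, hon i])
      (fun e hne => by rw [add_comm, hoff e hne]) h0 hs
    rw [← hre, ← h3]
    simp only [Complex.mul_re, Complex.star_def, Complex.conj_re, Complex.conj_im]
    ring

/-! ### The value of the determinant -/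

/-- A 2-colored graph with a perfect matching: `p` lists one color class and `q` sends each of its
vertices to its partner. -/
theorem exists_bipart {V : Type*} [Fintype V] [DecidableEq V] {G : SimpleGraph V}
    (hcol : G.Colorable 2) {x : Sym2 V → ZMod 2} (hx : IsPMVec G x) :
    ∃ (s : Finset V) (p q : s → V), Bipart G p q := by
  obtain ⟨C⟩ := hcol
  obtain ⟨m, hm⟩ := hx
  have hfin : ∀ a b : Fin 2, a ≠ 0 → b ≠ 0 → a = b := by decide
  have hm0 : ∀ v, C v = 0 → C (m v) ≠ 0 := fun v hv h => C.valid (hm.1 v) (by rw [hv, h])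
  have hm1 : ∀ v, C v ≠ 0 → C (m v) = 0 := fun v hv => by
    by_contra h
    exact C.valid (hm.1 v) (hfin _ _ hv h)
  have hinj : ∀ v w, m v = m w → v = w := fun v w h => by rw [← hm.invol v, h, hm.invol]
  have hs : ∀ a : Finset.univ.filter (fun v => C v = 0), C a.1 = 0 := fun a =>
    (Finset.mem_filter.1 a.2).2
  refine ⟨Finset.univ.filter (fun v => C v = 0), fun a => a.1, fun a => m a.1,
    ⟨⟨?_, ?_⟩, ?_, ?_⟩⟩
  · rintro (a | a) (b | b) hab <;> simp only [Sum.elim_inl, Sum.elim_inr] at hab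
    · rw [Subtype.ext hab]
    · exact absurd (hab ▸ hs a) (hm0 _ (hs b))
    · exact absurd (hab ▸ hs b) (hm0 _ (hs a))
    · rw [Subtype.ext (hinj _ _ hab)]
  · intro v
    by_cases hv : C v = 0
    · exact ⟨Sum.inl ⟨v, by simpa using hv⟩, rfl⟩
    · exact ⟨Sum.inr ⟨m v, by simpa using hm1 v hv⟩, hm.invol v⟩
  · intro a b hab
    exact C.valid hab (by rw [hs a, hs b])
  · intro a b hab
    exact C.valid hab (hfin _ _ (hm0 _ (hs a)) (hm0 _ (hs b)))

theorem walkVec_eq_of_sameCycle {V : Type*} [DecidableEq V] {G : SimpleGraph V} {u v : V}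
    {c : G.Walk u u} {d : G.Walk v v} (hc : c.IsCycle) (hd : d.IsCycle)
    (h : SameCycle c d) : walkVec c = walkVec d := by
  funext e
  have := Finset.ext_iff.1 h e
  simp only [List.mem_toFinset] at this
  rw [walkVec_of_isCycle hc, walkVec_of_isCycle hd]
  simp only [this]

/-- For unit complex numbers the pairwise ratios satisfy `z₂ z̄₃ = conj (z₁ z̄₂) · (z₁ z̄₃)`. If one
of the ratios on the right is `r = ±1` and the other has real part 0, then so has the left side; thus
in each case of `h` one ratio has real part `r`, the other two have real part 0, and only `r`
contributes to the squared modulus of the sum. -/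
theorem sum_three_mul_star {z₁ z₂ z₃ : ℂ} {r : ℝ} (h₁ : z₁ * star z₁ = 1) (h₂ : z₂ * star z₂ = 1)
    (h₃ : z₃ * star z₃ = 1)
    (h : ((z₁ * star z₂).re = r ∧ r ^ 2 = 1 ∧ (z₁ * star z₃).re = 0) ∨
      ((z₁ * star z₃).re = r ∧ r ^ 2 = 1 ∧ (z₁ * star z₂).re = 0) ∨
      ((z₂ * star z₃).re = r ∧ (z₁ * star z₂).re = 0 ∧ (z₁ * star z₃).re = 0)) :
    (z₁ + z₂ + z₃) * star (z₁ + z₂ + z₃) = ((3 + 2 * r : ℝ) : ℂ) := by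
  have hU : z₂ * star z₃ = star (z₁ * star z₂) * (z₁ * star z₃) := by
    rw [star_mul', star_star]
    linear_combination (-z₂ * star z₃) * h₁
  have hR : (z₁ * star z₂) * star (z₁ * star z₂) = 1 := by
    rw [star_mul', star_star]
    linear_combination (z₂ * star z₂) * h₁ + h₂
  have hT : (z₁ * star z₃) * star (z₁ * star z₃) = 1 := by
    rw [star_mul', star_star]
    linear_combination (z₃ * star z₃) * h₁ + h₃
  have hsum : (z₁ + z₂ + z₃) * star (z₁ + z₂ + z₃) =
      3 + ((z₁ * star z₂) + star (z₁ * star z₂)) + ((z₁ * star z₃) + star (z₁ * star z₃)) +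
        ((z₂ * star z₃) + star (z₂ * star z₃)) := by
    simp only [star_add, star_mul', star_star]
    linear_combination h₁ + h₂ + h₃
  rw [hsum]
  generalize z₁ * star z₂ = R at *
  generalize z₁ * star z₃ = T at *
  generalize z₂ * star z₃ = U at *
  have hUre : U.re = R.re * T.re + R.im * T.im := by
    rw [hU]; simp
  have hR' : R.re ^ 2 + R.im ^ 2 = 1 := by
    have := congrArg Complex.re hR
    simp at this
    linarith
  have hT' : T.re ^ 2 + T.im ^ 2 = 1 := by
    have := congrArg Complex.re hT
    simp at this
    linarith
  have htot : R.re + T.re + U.re = r := by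
    rcases h with ⟨h1, h2, h3⟩ | ⟨h1, h2, h3⟩ | ⟨h1, h2, h3⟩
    · have : R.im = 0 := by
        rw [h1] at hR'
        exact pow_eq_zero_iff (two_ne_zero) |>.1 (by linarith)
      rw [hUre, h1, h3, this]; ring
    · have : T.im = 0 := by
        rw [h1] at hT'
        exact pow_eq_zero_iff (two_ne_zero) |>.1 (by linarith)
      rw [hUre, h1, h3, this]; ring
    · rw [h1, h2, h3]; ring
  apply Complex.ext
  · simp
    linarith
  · simp

/-- Determinant of a θ-type bicyclic 3-colored digraph with a
perfect matching in which all three cycles are independent and exactly one cycle `Γ₁`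
has weight `±1`. -/
theorem stmt10 {V : Type*} [Fintype V] [DecidableEq V] (B : SimpleGraph V)
    (A : Matrix V V ℂ) (hA : ThreeColored B A) (hB : Bicyclic V B)
    (hθ : ThetaType B) (hpm : HasPM B)
    (hallind : ∀ (u : V) (c : B.Walk u u), c.IsCycle → IsIndep B c)
    {u : V} (Γ₁ : B.Walk u u) (hΓ : Γ₁.IsCycle)
    (hw1 : walkWeight A Γ₁ ∈ ({1, -1} : Set ℂ))
    (hother : ∀ (v : V) (d : B.Walk v v), d.IsCycle → ¬ SameCycle d Γ₁ →
      walkWeight A d ∈ ({Complex.I, -Complex.I} : Set ℂ)) :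
    A.det = (-1) ^ (Fintype.card V / 2) *
        (3 - 2 * walkWeight A Γ₁ * (-1) ^ (Γ₁.length / 2)) ∧ A.det ≠ 0 := by
  obtain ⟨x, v₁, v₂, c, d, hc, hd, hne, hx, hxc, hxd, hall⟩ :=
    exists_three_pms hB hθ hpm hallind
  obtain ⟨s, p, q, h⟩ := exists_bipart (two_colorable hB hpm hallind hc hd hne) hx
  have hevlen : ∀ {w : V} {γ : B.Walk w w}, γ.IsCycle → Even γ.length := fun hγ =>
    IsIndep.even_length hγ (hallind _ _ hγ) hpm
  obtain ⟨σ₁, hσ₁, e₁⟩ := hx.exists_perm h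
  obtain ⟨σ₂, hσ₂, e₂⟩ := hxc.exists_perm h
  obtain ⟨σ₃, hσ₃, e₃⟩ := hxd.exists_perm h
  have hκ0 := walkVec_ne_zero hc
  have hδ0 := walkVec_ne_zero hd
  have n12 : σ₁ ≠ σ₂ := by
    rintro rfl
    rw [e₁] at e₂
    exact hκ0 (by simpa using e₂.symm)
  have n13 : σ₁ ≠ σ₃ := by
    rintro rfl
    rw [e₁] at e₃
    exact hδ0 (by simpa using e₃.symm)
  have n23 : σ₂ ≠ σ₃ := by
    rintro rfl
    rw [e₂] at e₃
    exact hne (by simpa using e₃)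
  have hsum : ∑ σ, permTerm A p q σ =
      permTerm A p q σ₁ + permTerm A p q σ₂ + permTerm A p q σ₃ := by
    rw [← Finset.sum_subset (Finset.subset_univ {σ₁, σ₂, σ₃})]
    · rw [Finset.sum_insert (by simp [n12, n13]), Finset.sum_pair n23, add_assoc]
    · intro σ _ hσ
      refine permTerm_eq_zero hA fun hadj => hσ ?_
      simp only [Finset.mem_insert, Finset.mem_singleton]
      rcases hall _ (permVec_isPMVec h hadj) with h' | h' | h'
      · exact Or.inl (permVec_injective h (h'.trans e₁.symm))
      · exact Or.inr (Or.inl (permVec_injective h (h'.trans e₂.symm)))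
      · exact Or.inr (Or.inr (permVec_injective h (h'.trans e₃.symm)))
  have v12 : permVec p q σ₁ + permVec p q σ₂ = walkVec c := by
    rw [e₁, e₂, ← add_assoc, vec_add_self, zero_add]
  have v13 : permVec p q σ₁ + permVec p q σ₃ = walkVec d := by
    rw [e₁, e₃, ← add_assoc, vec_add_self, zero_add]
  have v23 : permVec p q σ₂ + permVec p q σ₃ = walkVec c + walkVec d := by
    rw [e₂, e₃, add_add_add_comm, vec_add_self, zero_add]
  have hzero : ∀ {w : V} (γ : B.Walk w w), γ.IsCycle → walkVec γ ≠ walkVec Γ₁ →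
      (walkWeight A γ).re = 0 := by
    intro w γ hγ hγne
    have := hother w γ hγ fun hs => hγne (walkVec_eq_of_sameCycle hγ hΓ hs)
    rcases this with h' | h' <;> rw [h'] <;> simp
  have hr : (-(-1) ^ (Γ₁.length / 2) * (walkWeight A Γ₁).re) ^ 2 = 1 := by
    rcases hw1 with h' | h' <;> rw [h'] <;>
      rcases neg_one_pow_eq_or ℝ (Γ₁.length / 2) with h'' | h'' <;> rw [h''] <;> simp
  have hdet := det_eq_normSq hA h
  rw [hsum, sum_three_mul_star (r := -(-1) ^ (Γ₁.length / 2) * (walkWeight A Γ₁).re)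
    (permTerm_mul_star_self hA hσ₁) (permTerm_mul_star_self hA hσ₂)
    (permTerm_mul_star_self hA hσ₃)] at hdet
  · have hcard : Fintype.card V / 2 = Fintype.card s := by
      rw [← Fintype.card_of_bijective h.bij, Fintype.card_sum]
      omega
    have heq : A.det = (-1) ^ (Fintype.card V / 2) *
        (3 - 2 * walkWeight A Γ₁ * (-1) ^ (Γ₁.length / 2)) := by
      rw [hdet, hcard]
      rcases hw1 with h' | h' <;> rw [h'] <;> push_cast <;> simp <;> ring
    refine ⟨heq, ?_⟩
    rw [heq]
    refine mul_ne_zero (pow_ne_zero _ (by norm_num)) ?_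
    rcases hw1 with h' | h' <;> rw [h'] <;>
      rcases neg_one_pow_eq_or ℂ (Γ₁.length / 2) with h'' | h'' <;> rw [h''] <;> norm_num
  · rcases IsEvenSet.cases hB (walkVec_isEvenSet Γ₁) (walkVec_isEvenSet c) (walkVec_isEvenSet d)
      hκ0 hδ0 hne with hcase | hcase | hcase | hcase
    · exact absurd hcase (walkVec_ne_zero hΓ)
    · left
      refine ⟨re_permTerm_mul_star hA h hσ₁ hσ₂ hΓ (hevlen hΓ) (v12.trans hcase.symm), hr, ?_⟩
      rw [re_permTerm_mul_star hA h hσ₁ hσ₃ hd (hevlen hd) v13,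
        hzero d hd (by rw [hcase]; exact hne.symm), mul_zero]
    · right; left
      refine ⟨re_permTerm_mul_star hA h hσ₁ hσ₃ hΓ (hevlen hΓ) (v13.trans hcase.symm), hr, ?_⟩
      rw [re_permTerm_mul_star hA h hσ₁ hσ₂ hc (hevlen hc) v12,
        hzero c hc (by rw [hcase]; exact hne), mul_zero]
    · right; right
      refine ⟨re_permTerm_mul_star hA h hσ₂ hσ₃ hΓ (hevlen hΓ) (v23.trans hcase.symm), ?_, ?_⟩
      · rw [re_permTerm_mul_star hA h hσ₁ hσ₂ hc (hevlen hc) v12,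
          hzero c hc (by rw [hcase]; simpa using hδ0), mul_zero]
      · rw [re_permTerm_mul_star hA h hσ₁ hσ₃ hd (hevlen hd) v13,
          hzero d hd (by rw [hcase]; simpa using hκ0), mul_zero]
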